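/- arXiv:math/9909109 — 3 statements merged into one kernel-verified Lean document; each statement's English description precedes it below -/
import Mathlib

section
/- Let ℓ ≥ 1 and let a, n, c : {1,…,ℓ} → ℝ be families of real numbers such that: n_i > 0 for all i; there is a nonempty subset I ⊆ {1,…,ℓ} with a_i < 0 for all i ∈ I and a_i ≥ 0 for all i ∉ I; there is an index i₀ ∈ I with −a_{i₀}/n_{i₀} ≥ −a_i/n_i for all i ∈ I; c_i ≥ 0 for all i ≠ i₀; and ∑_{i=1}^ℓ n_i·c_i < 0. Then ∑_{i=1}^ℓ a_i·c_i > 0. -/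
/-- Computational core of the proof of Prop. 2.1 (Fujiki-type extension criterion):
a finite-sum inequality for the coefficients of exceptional divisors. -/
theorem stmt_1 (ℓ : ℕ) (hℓ : 1 ≤ ℓ) (a n c : Fin ℓ → ℝ)
    (hn : ∀ i, 0 < n i)
    (I : Finset (Fin ℓ)) (hI : I.Nonempty)
    (haI : ∀ i ∈ I, a i < 0) (haI' : ∀ i ∉ I, 0 ≤ a i)
    (i₀ : Fin ℓ) (hi₀ : i₀ ∈ I)
    (hmax : ∀ i ∈ I, - a i / n i ≤ - a i₀ / n i₀)
    (hc : ∀ i, i ≠ i₀ → 0 ≤ c i)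
    (hsum : ∑ i, n i * c i < 0) :
    0 < ∑ i, a i * c i := by
  set t := -a i₀ / n i₀
  have ht_pos : 0 < t := div_pos (neg_pos.mpr (haI i₀ hi₀)) (hn i₀)
  have hbound : ∀ i, -a i ≤ t * n i := by
    intro i
    by_cases hi : i ∈ I
    · exact (div_le_iff₀ (hn i)).mp (hmax i hi)
    · linarith [haI' i hi, mul_pos ht_pos (hn i)]
  have hterm : ∀ i, -t * (n i * c i) ≤ a i * c i := by
    intro i
    rcases eq_or_ne i i₀ with rfl | hi
    · have h_eq : t * n i = -a i := div_mul_cancel₀ _ (hn i).ne'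
      exact le_of_eq (by linear_combination -c i * h_eq)
    · linarith [mul_le_mul_of_nonneg_right (hbound i) (hc i hi)]
  calc
    0 < -t * ∑ i, n i * c i := mul_pos_of_neg_of_neg (neg_neg_of_pos ht_pos) hsum
    _ = ∑ i, -t * (n i * c i) := Finset.mul_sum _ _ _
    _ ≤ ∑ i, a i * c i := Finset.sum_le_sum fun i _ => hterm i
end

section
/- Let V be a finite-dimensional real normed vector space, q : V → ℝ a quadratic form with associated symmetric bilinear form B (so q(v) = B(v,v)), and α ∈ V with q(α) > 0. Assume q is negative definite on the hyperplane {v ∈ V : B(α,v) = 0}, i.e. q(v) < 0 for every nonzero v with B(α,v) = 0. Then for all real numbers c < 0 and M ≥ 0, the set {v ∈ V : q(v) = c and |B(α,v)| ≤ M} is compact. -/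
/-- A bilinear form on a finite-dimensional normed space is continuous on the diagonal. -/
lemma continuous_bilin_self {V : Type*} [NormedAddCommGroup V] [NormedSpace ℝ V]
    [FiniteDimensional ℝ V] (B : V →ₗ[ℝ] V →ₗ[ℝ] ℝ) : Continuous fun v => B v v :=
  ((LinearMap.toContinuousLinearMap (𝕜 := ℝ) (E := V) (F' := ℝ)).toLinearMap ∘ₗ
    B).continuous_of_finiteDimensional.clm_apply continuous_id

/-- A positive definite bilinear form on a finite-dimensional normed space is coercive. -/
lemma exists_pos_mul_norm_sq_le_of_posDef {V : Type*} [NormedAddCommGroup V] [NormedSpace ℝ V]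
    [FiniteDimensional ℝ V] (D : V →ₗ[ℝ] V →ₗ[ℝ] ℝ) (hD : ∀ v, v ≠ 0 → 0 < D v v) :
    ∃ ε > 0, ∀ v, ε * ‖v‖ ^ 2 ≤ D v v := by
  have : ProperSpace V := FiniteDimensional.proper_real V
  obtain ⟨ε, hε, hle⟩ := (isCompact_sphere (0 : V) 1).exists_forall_le' (a := 0)
    (continuous_bilin_self D).continuousOn
    fun v hv => hD v (ne_zero_of_mem_unit_sphere ⟨v, hv⟩)
  refine ⟨ε, hε, fun v => ?_⟩
  rcases eq_or_ne v 0 with rfl | hv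
  · simp
  have hn : 0 < ‖v‖ := norm_pos_iff.mpr hv
  have h := hle (‖v‖⁻¹ • v) (by simp [norm_smul, hn.ne'])
  simp only [map_smul, LinearMap.smul_apply, smul_eq_mul] at h
  calc ε * ‖v‖ ^ 2 ≤ ‖v‖⁻¹ * (‖v‖⁻¹ * D v v) * ‖v‖ ^ 2 := by gcongr
    _ = D v v := by field_simp

/-- Changing the sign of a form that is positive on `α` and negative definite on the orthogonal
complement of `α`, except along `α`, gives a positive definite form. -/
lemma two_mul_sq_div_sub_pos {V : Type*} [AddCommGroup V] [Module ℝ V]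
    (B : V →ₗ[ℝ] V →ₗ[ℝ] ℝ) (hsymm : ∀ x y : V, B x y = B y x) (α : V) (hα : 0 < B α α)
    (hneg : ∀ v : V, v ≠ 0 → B α v = 0 → B v v < 0) (v : V) (hv : v ≠ 0) :
    0 < 2 / B α α * (B α v * B α v) - B v v := by
  have horth : B α (v - (B α v / B α α) • α) = 0 := by
    simp [hα.ne']
  have hself : B (v - (B α v / B α α) • α) (v - (B α v / B α α) • α)
      = B v v - B α v ^ 2 / B α α := by
    simp only [map_sub, map_smul, LinearMap.sub_apply, LinearMap.smul_apply, smul_eq_mul,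
      hsymm v α]
    field_simp
    ring
  have hsplit : 2 / B α α * (B α v * B α v) - B v v
      = B α v ^ 2 / B α α - (B v v - B α v ^ 2 / B α α) := by ring
  rw [hsplit, ← hself]
  by_cases hw : v - (B α v / B α α) • α = 0
  · have hαv : B α v ≠ 0 := fun h => hv (by simpa [h] using hw)
    rw [hw, map_zero, sub_zero]
    positivity
  · have := hneg _ hw horth
    have : 0 ≤ B α v ^ 2 / B α α := by positivity
    linarith

/-- Compactness core of the proof of Cor. 3.4: if a symmetric bilinear form `B` is
positive on `α` and negative definite on the orthogonal complement of `α`, then for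
`c < 0` and `M ≥ 0` the set of vectors `v` with `B v v = c` and `|B α v| ≤ M`
is compact. -/
theorem stmt_5 {V : Type*} [NormedAddCommGroup V] [NormedSpace ℝ V]
    [FiniteDimensional ℝ V]
    (B : V →ₗ[ℝ] V →ₗ[ℝ] ℝ) (hsymm : ∀ x y : V, B x y = B y x)
    (α : V) (hα : 0 < B α α)
    (hneg : ∀ v : V, v ≠ 0 → B α v = 0 → B v v < 0)
    (c M : ℝ) (hc : c < 0) (hM : 0 ≤ M) :
    IsCompact {v : V | B v v = c ∧ |B α v| ≤ M} := by
  have : ProperSpace V := FiniteDimensional.proper_real V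
  have hBα : Continuous (B α) := (B α).continuous_of_finiteDimensional
  obtain ⟨ε, hε, hle⟩ := exists_pos_mul_norm_sq_le_of_posDef
    ((2 / B α α) • (B α).smulRight (B α) - B) fun v hv => by
      simpa using two_mul_sq_div_sub_pos B hsymm α hα hneg v hv
  refine Metric.isCompact_of_isClosed_isBounded
    ((isClosed_eq (continuous_bilin_self B) continuous_const).inter
      (isClosed_le hBα.abs continuous_const)) ?_
  refine isBounded_iff_forall_norm_le.mpr
    ⟨√((2 / B α α * M ^ 2 - c) / ε), fun v ⟨hvc, hvM⟩ => Real.le_sqrt_of_sq_le ?_⟩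
  have h := hle v
  simp only [LinearMap.sub_apply, LinearMap.smul_apply, LinearMap.smulRight_apply, smul_eq_mul,
    hvc] at h
  have hsq : B α v * B α v ≤ M ^ 2 := by
    rw [← sq]
    exact sq_le_sq' (abs_le.mp hvM).1 (abs_le.mp hvM).2
  rw [le_div_iff₀ hε, mul_comm]
  refine h.trans ?_
  gcongr
end

section
/- Let V be a finite-dimensional real normed vector space, q : V → ℝ a quadratic form with associated symmetric bilinear form B (so q(v) = B(v,v)), and α ∈ V with q(α) > 0. Assume q is negative definite on the hyperplane {v ∈ V : B(α,v) = 0}, i.e. q(v) < 0 for every nonzero v with B(α,v) = 0. Let L ⊆ V be an additive subgroup that is discrete (every point of L has a neighborhood in V containing no other point of L). Then for all real numbers c < 0 and M ≥ 0, the set {v ∈ L : q(v) = c and |B(α,v)| ≤ M} is finite. -/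
/-- A quadratic form on a finite-dimensional real space is continuous. -/
theorem LinearMap.continuous_apply_self {V : Type*} [NormedAddCommGroup V] [NormedSpace ℝ V]
    [FiniteDimensional ℝ V] (A : V →ₗ[ℝ] V →ₗ[ℝ] ℝ) : Continuous fun v => A v v :=
  (LinearMap.continuous_of_finiteDimensional
    ((LinearMap.toContinuousLinearMap (𝕜 := ℝ) (E := V) (F' := ℝ)).toLinearMap ∘ₗ A)).clm_apply
      continuous_id

/-- A positive definite form on a finite-dimensional real space is coercive. -/
theorem LinearMap.exists_pos_mul_norm_sq_le {V : Type*} [NormedAddCommGroup V] [NormedSpace ℝ V]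
    [FiniteDimensional ℝ V] (A : V →ₗ[ℝ] V →ₗ[ℝ] ℝ) (hA : ∀ v, v ≠ 0 → 0 < A v v) :
    ∃ k > 0, ∀ v, k * ‖v‖ ^ 2 ≤ A v v := by
  obtain ⟨k, hk, hle⟩ := (isCompact_sphere (0 : V) 1).exists_forall_le'
    A.continuous_apply_self.continuousOn (a := 0)
    fun v hv => hA v (ne_zero_of_mem_unit_sphere ⟨v, hv⟩)
  refine ⟨k, hk, fun v => ?_⟩
  rcases eq_or_ne v 0 with rfl | hv
  · simp
  have hpos : 0 < ‖v‖ := norm_pos_iff.mpr hv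
  have h := hle (‖v‖⁻¹ • v) (by simp [norm_smul, hpos.ne'])
  simp only [map_smul, LinearMap.smul_apply, smul_eq_mul] at h
  calc k * ‖v‖ ^ 2 ≤ ‖v‖⁻¹ * (‖v‖⁻¹ * A v v) * ‖v‖ ^ 2 := by gcongr
    _ = A v v := by field_simp

/-- If a symmetric form `B` is negative definite on the orthogonal complement of a vector `α` of
positive square, then reversing its sign on that complement gives a positive definite form. -/
theorem LinearMap.pos_of_neg_on_orthogonal {V : Type*} [AddCommGroup V] [Module ℝ V]
    (B : V →ₗ[ℝ] V →ₗ[ℝ] ℝ) (hsymm : ∀ x y : V, B x y = B y x)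
    (α : V) (hα : 0 < B α α) (hneg : ∀ v : V, v ≠ 0 → B α v = 0 → B v v < 0)
    (v : V) (hv : v ≠ 0) : 0 < 2 / B α α * (B α v) ^ 2 - B v v := by
  by_cases h0 : B α v = 0
  · simpa [h0] using hneg v hv h0
  set w := v - (B α v / B α α) • α with hw
  have hαw : B α w = 0 := by simp [hw, hα.ne']
  have hww : B w w ≤ 0 := by
    rcases eq_or_ne w 0 with h | h
    · simp [h]
    · exact (hneg w h hαw).le
  have hexp : B w w = B v v - (B α v) ^ 2 / B α α := by
    simp only [hw, map_sub, map_smul, LinearMap.sub_apply, LinearMap.smul_apply, smul_eq_mul,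
      hsymm v α]
    field_simp
    ring
  have hsq : 0 < (B α v) ^ 2 / B α α := by positivity
  have : 2 / B α α * (B α v) ^ 2 = 2 * ((B α v) ^ 2 / B α α) := by ring
  linarith

/-- A bounded part of a discrete additive subgroup of a proper normed group is finite. -/
theorem AddSubgroup.finite_of_isBounded {V : Type*} [NormedAddCommGroup V] [ProperSpace V]
    (L : AddSubgroup V) (hL : ∀ x ∈ L, ∃ U ∈ nhds x, ∀ y ∈ L, y ∈ U → y = x)
    {s : Set V} (hs : Bornology.IsBounded s) (hsL : s ⊆ L) : s.Finite := by
  have : DiscreteTopology L := by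
    refine discreteTopology_iff_isOpen_singleton.mpr fun x => ?_
    obtain ⟨U, hU, h⟩ := hL x x.2
    refine isOpen_singleton_iff_nhds_eq_pure x |>.mpr (le_antisymm ?_ (pure_le_nhds x))
    refine Filter.le_pure_iff.mpr (Filter.mem_of_superset
      (continuous_subtype_val.continuousAt.preimage_mem_nhds hU) ?_)
    exact fun y hy => Subtype.ext (h y y.2 hy)
  exact (Metric.finite_isBounded_inter_isClosed DiscreteTopology.isDiscrete hs
    L.isClosed_of_discrete).subset fun x hx => ⟨hx, hsL hx⟩

/-- Lattice-theoretic core of the proof of Cor. 3.4: with `B` as in the compactness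
statement and `L` a discrete additive subgroup, the set of lattice vectors `v ∈ L`
with `B v v = c < 0` and `|B α v| ≤ M` is finite. -/
theorem stmt_6 {V : Type*} [NormedAddCommGroup V] [NormedSpace ℝ V]
    [FiniteDimensional ℝ V]
    (B : V →ₗ[ℝ] V →ₗ[ℝ] ℝ) (hsymm : ∀ x y : V, B x y = B y x)
    (α : V) (hα : 0 < B α α)
    (hneg : ∀ v : V, v ≠ 0 → B α v = 0 → B v v < 0)
    (L : AddSubgroup V)
    (hL : ∀ x ∈ L, ∃ U ∈ nhds x, ∀ y ∈ L, y ∈ U → y = x)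
    (c M : ℝ) (hc : c < 0) (hM : 0 ≤ M) :
    {v : V | v ∈ L ∧ B v v = c ∧ |B α v| ≤ M}.Finite := by
  obtain ⟨k, hk, hle⟩ := LinearMap.exists_pos_mul_norm_sq_le
    ((2 / B α α) • (B α).smulRight (B α) - B) fun v hv => by
      have h := B.pos_of_neg_on_orthogonal hsymm α hα hneg v hv
      simpa [sq] using h
  refine L.finite_of_isBounded hL ?_ fun v hv => hv.1
  refine isBounded_iff_forall_norm_le.mpr ⟨√((2 / B α α * M ^ 2 - c) / k), ?_⟩
  rintro v ⟨-, hvc, hvM⟩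
  refine Real.le_sqrt_of_sq_le ((le_div_iff₀' hk).mpr ((hle v).trans ?_))
  have hM2 : (B α v) ^ 2 ≤ M ^ 2 := sq_le_sq.mpr (hvM.trans (le_abs_self M))
  have : 2 / B α α * (B α v) ^ 2 ≤ 2 / B α α * M ^ 2 := by gcongr
  simpa [hvc, ← sq] using this
end
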